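/- Let m = 4, δ = 8, n = 32, and let Λ₁₁ ∈ GL₃₂(𝔽₂) be the permutation matrix of the bit rotation by 11 used in the GOST cipher, i.e. the i-th row of Λ₁₁ is the standard basis row vector 𝐞_{π(i)} with π(i) = ((i + 11 − 1) mod 32) + 1 for 1 ≤ i ≤ 32. Then Λ₁₁ changes the type of every subset D ⊆ 𝔽₂³² in standard form of non-trivial type: for every such D, the type of DΛ₁₁ differs from the type of D. -/

import Mathlib

/-!
Coordinate `p` of a rotated vector is coordinate `p - s` (mod `m * δ`) of the original one. On a
set in standard form the coordinates of the white bricks are constant and those of the black bricks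
are free, so a rotation preserving the type sends no free coordinate into a white box and no
constant coordinate into a black box.

If white and black bricks both occur, one of these is violated at an end of the vector: the last
coordinate, which is free, moves to position `s - 1`, and the first `m` coordinates, which are
constant, move to positions `s, …, s + m - 1`. If one of the two kinds is missing, the ruled brick
is the first or the last one. As the rotation is by at least one brick in either direction, the box
in its place is then read off non-ruled bricks of a single kind, so it is no longer ruled.
-/

open Matrix

/-- The index in `Fin (m * δ)` of the `i`-th coordinate of the `j`-th brick. -/
def brickIdx (m δ : ℕ) (j : Fin δ) (i : Fin m) : Fin (m * δ) :=
  ⟨m * j.val + i.val, by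
    have h1 : m * j.val + i.val < m * (j.val + 1) := by
      rw [Nat.mul_succ]
      exact Nat.add_lt_add_left i.isLt _
    exact lt_of_lt_of_le h1 (Nat.mul_le_mul le_rfl j.isLt)⟩

/-- The projection of a vector on its `j`-th brick. -/
def brickProj (m δ : ℕ) (v : Fin (m * δ) → ZMod 2) (j : Fin δ) : Fin m → ZMod 2 :=
  fun i => v (brickIdx m δ j i)

/-- The `j`-th box of a subset `D`: the projection of `D` on the `j`-th brick. -/
def box (m δ : ℕ) (D : Set (Fin (m * δ) → ZMod 2)) (j : Fin δ) : Set (Fin m → ZMod 2) :=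
  (fun v => brickProj m δ v j) '' D

/-- A box is white if it is a singleton. -/
def IsWhite {α : Type*} (S : Set α) : Prop := ∃ a, S = {a}

/-- A box is black if it is everything. -/
def IsBlack {α : Type*} (S : Set α) : Prop := S = Set.univ

/-- A box is ruled if it is neither white nor black. -/
def IsRuled {α : Type*} (S : Set α) : Prop := ¬ IsWhite S ∧ ¬ IsBlack S

/-- The set `{v_w} × R × 𝔽₂^{m·n_b}` in standard form: the first `nw` bricks are fixed
(equal to `w`), the brick number `nw` (0-indexed) lies in `R` when `nr = 1`, and the
remaining bricks are free. -/
def StdSet (m δ nw nr : ℕ) (w : Fin δ → Fin m → ZMod 2) (R : Set (Fin m → ZMod 2)) :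
    Set (Fin (m * δ) → ZMod 2) :=
  { v | (∀ j : Fin δ, (j : ℕ) < nw → brickProj m δ v j = w j) ∧
        (nr = 1 → ∀ j : Fin δ, (j : ℕ) = nw → brickProj m δ v j ∈ R) }

/-- `D` is in standard form of type `(nw, nr, nb)`. -/
def StdForm (m δ : ℕ) (D : Set (Fin (m * δ) → ZMod 2)) (nw nr nb : ℕ) : Prop :=
  nw + nr + nb = δ ∧ nr ≤ 1 ∧
  ∃ (w : Fin δ → Fin m → ZMod 2) (R : Set (Fin m → ZMod 2)),
    (nr = 1 → 2 ≤ R.ncard ∧ R.ncard ≤ 2 ^ m - 1) ∧ D = StdSet m δ nw nr w R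

/-- `D` has type `(nw, nr, nb)`: its first `nw` boxes are white, the next `nr` boxes are
ruled, and its last `nb` boxes are black. -/
def HasType (m δ : ℕ) (D : Set (Fin (m * δ) → ZMod 2)) (nw nr nb : ℕ) : Prop :=
  nw + nr + nb = δ ∧ nr ≤ 1 ∧
  ∀ j : Fin δ,
    ((j : ℕ) < nw → IsWhite (box m δ D j)) ∧
    (nw ≤ (j : ℕ) → (j : ℕ) < nw + nr → IsRuled (box m δ D j)) ∧
    (nw + nr ≤ (j : ℕ) → IsBlack (box m δ D j))

/-- `D` and `E` have the same type: corresponding boxes have the same kind. -/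
def SameType (m δ : ℕ) (D E : Set (Fin (m * δ) → ZMod 2)) : Prop :=
  ∀ j : Fin δ,
    (IsWhite (box m δ D j) ↔ IsWhite (box m δ E j)) ∧
    (IsBlack (box m δ D j) ↔ IsBlack (box m δ E j))

lemma m_le_mul (m d : ℕ) (h : 1 ≤ d) : m ≤ m * d := by
  calc m = m * 1 := (Nat.mul_one m).symm
  _ ≤ m * d := Nat.mul_le_mul le_rfl h

lemma shift_lt (m δ a : ℕ) (ha : a ≤ δ) (k : ℕ) (hk : k < m * (δ - a)) :
    m * a + k < m * δ := by
  have h := Nat.add_lt_add_left hk (m * a)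
  rwa [← Nat.mul_add, Nat.add_sub_cancel' ha] at h

/-- The index in `Fin (m * δ)` obtained by skipping the first `a` bricks. -/
def shiftIdx (m δ a : ℕ) (ha : a ≤ δ) (k : Fin (m * (δ - a))) : Fin (m * δ) :=
  ⟨m * a + k.val, shift_lt m δ a ha k.val k.isLt⟩

/-- The submatrix `Λ_{(a+1,b+1):(δ,δ)}` (blocks with row brick ≥ a and column brick ≥ b). -/
def subBlock (m δ : ℕ) (Λ : Matrix (Fin (m * δ)) (Fin (m * δ)) (ZMod 2))
    (a b : ℕ) (ha : a ≤ δ) (hb : b ≤ δ) :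
    Matrix (Fin (m * (δ - a))) (Fin (m * (δ - b))) (ZMod 2) :=
  Matrix.of fun r c => Λ (shiftIdx m δ a ha r) (shiftIdx m δ b hb c)

/-- The column of blocks `Λ_{(a+1,j+1):(δ,j+1)}` (row bricks ≥ a, column brick j). -/
def subColBlock (m δ : ℕ) (Λ : Matrix (Fin (m * δ)) (Fin (m * δ)) (ZMod 2))
    (a : ℕ) (ha : a ≤ δ) (j : Fin δ) :
    Matrix (Fin (m * (δ - a))) (Fin m) (ZMod 2) :=
  Matrix.of fun r c => Λ (shiftIdx m δ a ha r) (brickIdx m δ j c)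

/-- The row of blocks `Λ_{(j+1,1):(j+1,c2)}` (row brick j, column bricks < c2). -/
def rowBlock (m δ : ℕ) (Λ : Matrix (Fin (m * δ)) (Fin (m * δ)) (ZMod 2))
    (j : Fin δ) (c2 : ℕ) (hc : c2 ≤ δ) :
    Matrix (Fin m) (Fin (m * c2)) (ZMod 2) :=
  Matrix.of fun i c => Λ (brickIdx m δ j i) (Fin.castLE (Nat.mul_le_mul le_rfl hc) c)

/-- The block `Λ_{j+1, j'+1}`. -/
def block (m δ : ℕ) (Λ : Matrix (Fin (m * δ)) (Fin (m * δ)) (ZMod 2)) (j j' : Fin δ) :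
    Matrix (Fin m) (Fin m) (ZMod 2) :=
  Matrix.of fun i i' => Λ (brickIdx m δ j i) (brickIdx m δ j' i')

/-- The set `R × 𝔽₂^{m (d-1)}` of vectors of `d` bricks whose first brick lies in `R`. -/
def rulDomain (m d : ℕ) (hd : 1 ≤ d) (R : Set (Fin m → ZMod 2)) :
    Set (Fin (m * d) → ZMod 2) :=
  { u | (fun i : Fin m => u (Fin.castLE (m_le_mul m d hd) i)) ∈ R }

/-- The permutation matrix of the bit rotation `i ↦ (i + s) mod n` (0-indexed); its `i`-th
row is the standard basis row vector with `1` in position `(i + s) mod n`. -/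
def rotMatrix (n s : ℕ) : Matrix (Fin n) (Fin n) (ZMod 2) :=
  Matrix.of fun i j => if (j : ℕ) = ((i : ℕ) + s) % n then 1 else 0

section CoordinateProjections

variable {ι κ α : Type*} {D : Set (ι → α)} {F : Set ι} {c : κ → ι}

/-- The members of `D` agree on the coordinates in `F`: these coordinates are constant on `D`. -/
def IsFixedOn (D : Set (ι → α)) (F : Set ι) : Prop :=
  ∀ ⦃v⦄, v ∈ D → ∀ ⦃v'⦄, v' ∈ D → Set.EqOn v v' F

/-- The coordinates in `F` can be prescribed arbitrarily and independently within `D`. The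
prescribed values are given as a vector `u` whose coordinates outside `F` are ignored. -/
def IsFreeOn (D : Set (ι → α)) (F : Set ι) : Prop :=
  ∀ u : ι → α, ∃ v ∈ D, Set.EqOn v u F

lemma IsFreeOn.nonempty [Nonempty α] (hF : IsFreeOn D F) : D.Nonempty :=
  let ⟨v, hv, _⟩ := hF (Classical.arbitrary _)
  ⟨v, hv⟩

lemma IsFixedOn.isWhite_image_comp (hF : IsFixedOn D F) (hD : D.Nonempty) (hc : ∀ i, c i ∈ F) :
    IsWhite ((· ∘ c) '' D) := by
  obtain ⟨v, hv⟩ := hD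
  refine ⟨v ∘ c, Set.eq_singleton_iff_unique_mem.2 ⟨⟨v, hv, rfl⟩, ?_⟩⟩
  rintro _ ⟨v', hv', rfl⟩
  exact funext fun i => hF hv' hv (hc i)

lemma IsFreeOn.isBlack_image_comp [Nonempty α] (hF : IsFreeOn D F) (hinj : Function.Injective c)
    (hc : ∀ i, c i ∈ F) : IsBlack ((· ∘ c) '' D) := by
  refine Set.eq_univ_of_forall fun x => ?_
  obtain ⟨v, hv, hvx⟩ := hF (Function.extend c x (Classical.arbitrary _))
  exact ⟨v, hv, funext fun i => (hvx (hc i)).trans (hinj.extend_apply ..)⟩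

lemma IsFixedOn.not_isBlack_image_comp [Nontrivial α] (hF : IsFixedOn D F) {i : κ}
    (hi : c i ∈ F) : ¬ IsBlack ((· ∘ c) '' D) := by
  intro hblack
  obtain ⟨a, b, hab⟩ := exists_pair_ne α
  obtain ⟨v, hv, hva⟩ := hblack.ge (Set.mem_univ fun _ => a)
  obtain ⟨v', hv', hvb⟩ := hblack.ge (Set.mem_univ fun _ => b)
  exact hab ((congrFun hva i).symm.trans ((hF hv hv' hi).trans (congrFun hvb i)))

lemma IsFreeOn.not_isWhite_image_comp [Nontrivial α] (hF : IsFreeOn D F) {i : κ}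
    (hi : c i ∈ F) : ¬ IsWhite ((· ∘ c) '' D) := by
  rintro ⟨x, hx⟩
  obtain ⟨a, ha⟩ := exists_ne (x i)
  obtain ⟨v, hv, hva⟩ := hF fun _ => a
  have hvx : v ∘ c = x := hx.le ⟨v, hv, rfl⟩
  exact ha ((hva hi).symm.trans (congrFun hvx i))

end CoordinateProjections

lemma isRuled_of_ncard {α : Type*} {S : Set α} (htwo : 2 ≤ S.ncard)
    (hlt : S.ncard < Nat.card α) : IsRuled S := by
  constructor
  · rintro ⟨a, rfl⟩
    rw [Set.ncard_singleton] at htwo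
    omega
  · rintro rfl
    exact hlt.ne (Set.ncard_univ α)

section Bricks

variable {m δ : ℕ}

lemma brickIdx_lt_mul_iff {j : Fin δ} {i : Fin m} {a : ℕ} :
    (brickIdx m δ j i : ℕ) < m * a ↔ (j : ℕ) < a := by
  rw [Nat.mul_comm m a, ← Nat.div_lt_iff_lt_mul i.pos]
  simp [brickIdx, Nat.mul_add_div i.pos, Nat.div_eq_of_lt i.isLt]

lemma mul_le_brickIdx_iff {j : Fin δ} {i : Fin m} {a : ℕ} :
    m * a ≤ (brickIdx m δ j i : ℕ) ↔ a ≤ (j : ℕ) := by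
  simpa only [not_lt] using brickIdx_lt_mul_iff.not

variable (m δ) in
/-- Coordinates as pairs of a brick and a position in that brick. -/
def brickEquiv : Fin δ × Fin m ≃ Fin (m * δ) :=
  finProdFinEquiv.trans (finCongr (Nat.mul_comm δ m))

lemma brickEquiv_apply (j : Fin δ) (i : Fin m) : brickEquiv m δ (j, i) = brickIdx m δ j i :=
  Fin.ext (Nat.add_comm _ _)

lemma exists_brickIdx_eq (p : Fin (m * δ)) : ∃ j i, brickIdx m δ j i = p := by
  obtain ⟨⟨j, i⟩, rfl⟩ := (brickEquiv m δ).surjective p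
  exact ⟨j, i, (brickEquiv_apply j i).symm⟩

lemma brickIdx_injective (j : Fin δ) : Function.Injective (brickIdx m δ j) := fun i i' h => by
  simpa only [← brickEquiv_apply, EmbeddingLike.apply_eq_iff_eq, Prod.mk.injEq, true_and] using h

lemma exists_brickProj_eq (f : Fin δ → Fin m → ZMod 2) :
    ∃ v : Fin (m * δ) → ZMod 2, ∀ j, brickProj m δ v j = f j := by
  refine ⟨Function.uncurry f ∘ (brickEquiv m δ).symm, fun j => funext fun i => ?_⟩
  simp only [brickProj, Function.comp_apply, ← brickEquiv_apply, Equiv.symm_apply_apply,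
    Function.uncurry_apply_pair]

end Bricks

section StandardForm

variable {m δ nw nr : ℕ} {w : Fin δ → Fin m → ZMod 2} {R : Set (Fin m → ZMod 2)}

lemma isFixedOn_stdSet :
    IsFixedOn (StdSet m δ nw nr w R) {p : Fin (m * δ) | (p : ℕ) < m * nw} := by
  intro v hv v' hv' p hp
  obtain ⟨j, i, rfl⟩ := exists_brickIdx_eq p
  have hj : (j : ℕ) < nw := brickIdx_lt_mul_iff.1 hp
  exact congrFun ((hv.1 j hj).trans (hv'.1 j hj).symm) i

lemma isFreeOn_stdSet (hR : nr = 1 → R.Nonempty) :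
    IsFreeOn (StdSet m δ nw nr w R) {p : Fin (m * δ) | m * (nw + nr) ≤ p} := by
  intro u
  obtain ⟨r, hr⟩ : ∃ r, nr = 1 → r ∈ R := by
    by_cases h : nr = 1
    · exact (hR h).imp fun _ hr _ => hr
    · exact ⟨0, fun h' => absurd h' h⟩
  obtain ⟨v, hv⟩ := exists_brickProj_eq fun j : Fin δ =>
    if (j : ℕ) < nw then w j else if (j : ℕ) < nw + nr then r else brickProj m δ u j
  refine ⟨v, ⟨fun j hj => ?_, fun hnr j hj => ?_⟩, fun p hp => ?_⟩
  · rw [hv, if_pos hj]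
  · rw [hv, if_neg (by omega), if_pos (by omega)]
    exact hr hnr
  · obtain ⟨j, i, rfl⟩ := exists_brickIdx_eq p
    have hj : nw + nr ≤ (j : ℕ) := mul_le_brickIdx_iff.1 hp
    have hvj : brickProj m δ v j = brickProj m δ u j := by
      rw [hv, if_neg (by omega), if_neg (by omega)]
    exact congrFun hvj i

lemma isWhite_box_stdSet (hR : nr = 1 → R.Nonempty) {j : Fin δ} (hj : (j : ℕ) < nw) :
    IsWhite (box m δ (StdSet m δ nw nr w R) j) :=
  isFixedOn_stdSet.isWhite_image_comp (isFreeOn_stdSet hR).nonempty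
    fun _ => brickIdx_lt_mul_iff.2 hj

lemma isBlack_box_stdSet (hR : nr = 1 → R.Nonempty) {j : Fin δ} (hj : nw + nr ≤ (j : ℕ)) :
    IsBlack (box m δ (StdSet m δ nw nr w R) j) :=
  (isFreeOn_stdSet hR).isBlack_image_comp (brickIdx_injective j) fun _ => mul_le_brickIdx_iff.2 hj

lemma box_stdSet_of_eq {j : Fin δ} (hj : (j : ℕ) = nw) :
    box m δ (StdSet m δ nw 1 w R) j = R := by
  ext r
  constructor
  · rintro ⟨v, hv, rfl⟩
    exact hv.2 rfl j hj
  · intro hr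
    obtain ⟨v, hv⟩ := exists_brickProj_eq fun j : Fin δ => if (j : ℕ) < nw then w j else r
    refine ⟨v, ⟨fun j' hj' => by rw [hv, if_pos hj'], fun _ j' hj' => ?_⟩, ?_⟩
    · rwa [hv, if_neg (by omega)]
    · exact (hv j).trans (if_neg (by omega))

end StandardForm

section Rotation

variable {n s : ℕ}

/-- The coordinate `p - s` modulo `n`, which the rotation by `s` moves to `p`. The sum avoids
truncated subtraction and is correct for `s ≤ n`. -/
def rotSource (n s : ℕ) (p : Fin n) : Fin n :=
  ⟨(p + (n - s)) % n, Nat.mod_lt _ p.pos⟩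

lemma rotSource_of_le (hs : s ≤ n) {p : Fin n} (hp : s ≤ (p : ℕ)) :
    (rotSource n s p : ℕ) = p - s := by
  have hsum : (p : ℕ) + (n - s) = p - s + n := by omega
  simp only [rotSource, hsum, Nat.add_mod_right, Nat.mod_eq_of_lt (show p - s < n by omega)]

lemma rotSource_of_lt (hs : s ≤ n) {p : Fin n} (hp : (p : ℕ) < s) :
    (rotSource n s p : ℕ) = p + (n - s) :=
  Nat.mod_eq_of_lt (by omega)

lemma rotSource_eq_iff (hs : s ≤ n) {p q : Fin n} :
    rotSource n s p = q ↔ (p : ℕ) = (q + s) % n := by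
  have hmod : ((q : ℕ) + s) % n = if (q : ℕ) + s < n then (q : ℕ) + s else q + s - n := by
    split_ifs with hlt
    · exact Nat.mod_eq_of_lt hlt
    · rw [Nat.mod_eq_sub_mod (not_lt.1 hlt), Nat.mod_eq_of_lt (by omega)]
  rw [Fin.ext_iff, hmod]
  rcases lt_or_ge (p : ℕ) s with hp | hp
  · rw [rotSource_of_lt hs hp]
    split_ifs <;> omega
  · rw [rotSource_of_le hs hp]
    split_ifs <;> omega

lemma rotSource_injective (hs : s ≤ n) : Function.Injective (rotSource n s) := fun _ _ h =>
  Fin.ext (((rotSource_eq_iff hs).1 h).trans ((rotSource_eq_iff hs).1 rfl).symm)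

lemma vecMul_rotMatrix (hs : s ≤ n) (v : Fin n → ZMod 2) :
    vecMul v (rotMatrix n s) = v ∘ rotSource n s := by
  ext p
  simp [vecMul, dotProduct, rotMatrix, ← rotSource_eq_iff hs]

end Rotation

section RotatedBoxes

variable {m δ s : ℕ} {D : Set (Fin (m * δ) → ZMod 2)}

lemma box_image_vecMul_rotMatrix (hs : s ≤ m * δ) (j : Fin δ) :
    box m δ ((fun v => vecMul v (rotMatrix (m * δ) s)) '' D) j =
      (· ∘ (rotSource (m * δ) s ∘ brickIdx m δ j)) '' D := by
  simp only [vecMul_rotMatrix hs, box, Set.image_image]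
  rfl

variable (m δ s D) in
/-- The rotation by `s` preserves the type of `D`; this is what is to be refuted for sets in
standard form of non-trivial type. -/
def RotPreservesType : Prop :=
  SameType m δ D ((fun v => vecMul v (rotMatrix (m * δ) s)) '' D)

namespace RotPreservesType

lemma isWhite_iff (h : RotPreservesType m δ s D) (hs : s ≤ m * δ) (j : Fin δ) :
    IsWhite (box m δ D j) ↔ IsWhite ((· ∘ (rotSource (m * δ) s ∘ brickIdx m δ j)) '' D) := by
  rw [← box_image_vecMul_rotMatrix hs]
  exact (h j).1

lemma isBlack_iff (h : RotPreservesType m δ s D) (hs : s ≤ m * δ) (j : Fin δ) :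
    IsBlack (box m δ D j) ↔ IsBlack ((· ∘ (rotSource (m * δ) s ∘ brickIdx m δ j)) '' D) := by
  rw [← box_image_vecMul_rotMatrix hs]
  exact (h j).2

variable {nw nr : ℕ} {w : Fin δ → Fin m → ZMod 2} {R : Set (Fin m → ZMod 2)} {p : Fin (m * δ)}

lemma rotSource_lt (h : RotPreservesType m δ s (StdSet m δ nw nr w R)) (hs : s ≤ m * δ)
    (hR : nr = 1 → R.Nonempty) (hp : (p : ℕ) < m * nw) :
    (rotSource (m * δ) s p : ℕ) < m * (nw + nr) := by
  obtain ⟨j, i, rfl⟩ := exists_brickIdx_eq p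
  by_contra! hle
  exact (isFreeOn_stdSet hR).not_isWhite_image_comp (i := i) hle
    ((h.isWhite_iff hs j).1 (isWhite_box_stdSet hR (brickIdx_lt_mul_iff.1 hp)))

lemma le_rotSource (h : RotPreservesType m δ s (StdSet m δ nw nr w R)) (hs : s ≤ m * δ)
    (hR : nr = 1 → R.Nonempty) (hp : m * (nw + nr) ≤ p) :
    m * nw ≤ (rotSource (m * δ) s p : ℕ) := by
  obtain ⟨j, i, rfl⟩ := exists_brickIdx_eq p
  by_contra! hlt
  exact isFixedOn_stdSet.not_isBlack_image_comp (i := i) hlt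
    ((h.isBlack_iff hs j).1 (isBlack_box_stdSet hR (mul_le_brickIdx_iff.1 hp)))

lemma exists_rotSource_lt (h : RotPreservesType m δ s (StdSet m δ nw 1 w R)) (hs : s ≤ m * δ)
    (hR : R.Nonempty) (hruled : IsRuled R) {j : Fin δ} (hj : (j : ℕ) = nw) :
    ∃ i, (rotSource (m * δ) s (brickIdx m δ j i) : ℕ) < m * (nw + 1) := by
  by_contra! hall
  have hblack := (isFreeOn_stdSet (w := w) fun _ => hR).isBlack_image_comp
    ((rotSource_injective hs).comp (brickIdx_injective j)) hall
  rw [← h.isBlack_iff hs, box_stdSet_of_eq hj] at hblack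
  exact hruled.2 hblack

lemma exists_le_rotSource (h : RotPreservesType m δ s (StdSet m δ nw 1 w R)) (hs : s ≤ m * δ)
    (hR : R.Nonempty) (hruled : IsRuled R) {j : Fin δ} (hj : (j : ℕ) = nw) :
    ∃ i, m * nw ≤ (rotSource (m * δ) s (brickIdx m δ j i) : ℕ) := by
  by_contra! hall
  have hwhite := (isFixedOn_stdSet (nr := 1) (w := w) (R := R)).isWhite_image_comp
    (c := rotSource (m * δ) s ∘ brickIdx m δ j) (isFreeOn_stdSet fun _ => hR).nonempty hall
  rw [← h.isWhite_iff hs, box_stdSet_of_eq hj] at hwhite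
  exact hruled.1 hwhite

lemma nw_eq_zero_or_nb_eq_zero {nb : ℕ} (h : RotPreservesType m δ s (StdSet m δ nw nr w R))
    (hsum : nw + nr + nb = δ) (hnr : nr ≤ 1) (hR : nr = 1 → R.Nonempty) (hm : 0 < m)
    (hms : m ≤ s) (hsm : s + m ≤ m * δ) : nw = 0 ∨ nb = 0 := by
  by_contra! hne
  have hs : s ≤ m * δ := by omega
  have hlen : m * δ = m * (nw + nr) + m * nb := by rw [← hsum, Nat.mul_add]
  have hnb : m ≤ m * nb := Nat.le_mul_of_pos_right m (Nat.pos_of_ne_zero hne.2)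
  have hnw : m ≤ m * nw := Nat.le_mul_of_pos_right m (Nat.pos_of_ne_zero hne.1)
  have hruled : m * (nw + nr) ≤ m * nw + m := Nat.mul_le_mul_left m (Nat.add_le_add_left hnr nw)
  rcases le_or_gt s (m * nw) with hle | hlt
  · let p : Fin (m * δ) := ⟨s - 1, by omega⟩
    have hlast : (rotSource (m * δ) s p : ℕ) = s - 1 + (m * δ - s) :=
      rotSource_of_lt hs (Nat.sub_one_lt_of_lt (hm.trans_le hms))
    have := h.rotSource_lt hs hR (p := p) (show s - 1 < m * nw by omega)
    omega
  · -- Position `s` may lie in the ruled brick; the first black position then serves instead.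
    let p : Fin (m * δ) := ⟨max s (m * (nw + nr)), by omega⟩
    have hfirst : (rotSource (m * δ) s p : ℕ) = max s (m * (nw + nr)) - s :=
      rotSource_of_le hs (le_max_left ..)
    have := h.le_rotSource hs hR (p := p) (le_max_right ..)
    omega

lemma nw_pos (h : RotPreservesType m δ s (StdSet m δ nw 1 w R)) (hR : R.Nonempty)
    (hruled : IsRuled R) (hnw : nw < δ) (hms : m ≤ s) (hsm : s + m ≤ m * δ) : 0 < nw := by
  by_contra! hzero
  obtain rfl : nw = 0 := Nat.le_zero.1 hzero
  have hs : s ≤ m * δ := by omega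
  obtain ⟨i, hi⟩ := h.exists_rotSource_lt hs hR hruled (j := ⟨0, hnw⟩) rfl
  have hlt : (brickIdx m δ ⟨0, hnw⟩ i : ℕ) < m * 1 := brickIdx_lt_mul_iff.2 one_pos
  rw [rotSource_of_lt hs (by omega)] at hi
  omega

lemma succ_nw_lt (h : RotPreservesType m δ s (StdSet m δ nw 1 w R)) (hR : R.Nonempty)
    (hruled : IsRuled R) (hnw : nw < δ) (hms : m ≤ s) (hsm : s + m ≤ m * δ) : nw + 1 < δ := by
  by_contra! hlast
  obtain rfl : nw + 1 = δ := le_antisymm hnw hlast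
  have hs : s ≤ m * (nw + 1) := by omega
  have hlen : m * (nw + 1) = m * nw + m := Nat.mul_succ m nw
  obtain ⟨i, hi⟩ := h.exists_le_rotSource hs hR hruled (j := ⟨nw, hnw⟩) rfl
  have hle : m * nw ≤ (brickIdx m (nw + 1) ⟨nw, hnw⟩ i : ℕ) := mul_le_brickIdx_iff.2 le_rfl
  rw [rotSource_of_le hs (by omega)] at hi
  omega

end RotPreservesType

end RotatedBoxes

theorem stmt_12_general {m δ s : ℕ} (hm : 0 < m) (hms : m ≤ s) (hsm : s + m ≤ m * δ)
    {D : Set (Fin (m * δ) → ZMod 2)} {nw nr nb : ℕ} (hD : StdForm m δ D nw nr nb)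
    (hnw : nw ≠ δ) (hnb : nb ≠ δ) :
    ¬ SameType m δ D ((fun v => vecMul v (rotMatrix (m * δ) s)) '' D) := by
  obtain ⟨hsum, hnr, w, R, hcard, rfl⟩ := hD
  intro (h : RotPreservesType m δ s (StdSet m δ nw nr w R))
  have hR (h1 : nr = 1) : R.Nonempty :=
    Set.nonempty_of_ncard_ne_zero (by have := hcard h1; omega)
  have hzero : nw = 0 ∨ nb = 0 := h.nw_eq_zero_or_nb_eq_zero hsum hnr hR hm hms hsm
  obtain rfl : nr = 1 := by omega
  have hruled : IsRuled R := isRuled_of_ncard (hcard rfl).1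
    (by simpa using Nat.lt_of_le_sub_one (Nat.two_pow_pos m) (hcard rfl).2)
  have hfirst := h.nw_pos (hR rfl) hruled (by omega) hms hsm
  have hlast := h.succ_nw_lt (hR rfl) hruled (by omega) hms hsm
  omega

/-- **GOST rotation.** With `m = 4`, `δ = 8`, `n = 32`, the GOST rotation
matrix `Λ₁₁` changes the type of every subset `D ⊆ 𝔽₂³²` in standard form of non-trivial
type. -/
theorem stmt_12 :
    ∀ (D : Set (Fin (4 * 8) → ZMod 2)) (nw nr nb : ℕ),
      StdForm 4 8 D nw nr nb → nw ≠ 8 → nb ≠ 8 →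
      ¬ SameType 4 8 D ((fun v => Matrix.vecMul v (rotMatrix (4 * 8) 11)) '' D) :=
  fun _ _ _ _ hD hnw hnb => stmt_12_general (by decide) (by decide) (by decide) hD hnw hnb
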